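/- arXiv:1307.4709 — 2 statements merged into one kernel-verified Lean document; each statement's English description precedes it below -/
import Mathlib

section
/- Non-conforming minorant for the gradient part: let ṽ ∈ L²(Ω;ℝ^N), set E := ∇û − A^{−1}ṽ, and let E = g + A^{−1}ψ with g ∈ 𝒢, ψ ∈ D₀ be its Helmholtz decomposition. Then for every u ∈ H¹°₋₁(Ω), ‖g‖²_A ≥ M₋(A^{−1}ṽ,u) := 2∫_Ω f u dx − ∫_Ω A∇u·∇u dx − 2∫_Ω ṽ·∇u dx. -/
open MeasureTheory Filter Topology
open scoped RealInnerProductSpace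

noncomputable section

/-- Euclidean space `ℝ^N`. -/
abbrev Euc (N : ℕ) := EuclideanSpace ℝ (Fin N)

/-- The Poincaré constant `c_N = 2/(N-2)`. -/
def cN (N : ℕ) : ℝ := 2 / ((N : ℝ) - 2)

variable {N : ℕ}

/-- Squared weighted `L²_s(Ω)` norm: `∫_Ω (1+|x|²)^s u(x)² dx`. -/
def sqL2 (Ω : Set (Euc N)) (s : ℝ) (u : Euc N → ℝ) : ℝ :=
  ∫ x in Ω, (1 + ‖x‖ ^ 2) ^ s * u x ^ 2

/-- Weighted `L²_s(Ω)` norm. -/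
def nrmL2 (Ω : Set (Euc N)) (s : ℝ) (u : Euc N → ℝ) : ℝ :=
  Real.sqrt (sqL2 Ω s u)

/-- Membership in the weighted space `L²_s(Ω)` (scalar functions). -/
def MemL2 (Ω : Set (Euc N)) (s : ℝ) (u : Euc N → ℝ) : Prop :=
  AEStronglyMeasurable u (volume.restrict Ω) ∧
    Integrable (fun x => (1 + ‖x‖ ^ 2) ^ s * u x ^ 2) (volume.restrict Ω)

/-- Squared weighted `L²_s(Ω;ℝ^N)` norm for vector fields. -/
def sqL2V (Ω : Set (Euc N)) (s : ℝ) (v : Euc N → Euc N) : ℝ :=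
  ∫ x in Ω, (1 + ‖x‖ ^ 2) ^ s * ‖v x‖ ^ 2

/-- Weighted `L²_s(Ω;ℝ^N)` norm for vector fields. -/
def nrmL2V (Ω : Set (Euc N)) (s : ℝ) (v : Euc N → Euc N) : ℝ :=
  Real.sqrt (sqL2V Ω s v)

/-- Membership in the weighted space `L²_s(Ω;ℝ^N)` (vector fields). -/
def MemL2V (Ω : Set (Euc N)) (s : ℝ) (v : Euc N → Euc N) : Prop :=
  AEStronglyMeasurable v (volume.restrict Ω) ∧
    Integrable (fun x => (1 + ‖x‖ ^ 2) ^ s * ‖v x‖ ^ 2) (volume.restrict Ω)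

/-- Test functions: `φ ∈ C_c^∞(Ω)`. -/
def IsTest (Ω : Set (Euc N)) (φ : Euc N → ℝ) : Prop :=
  ContDiff ℝ (⊤ : ℕ∞) φ ∧ HasCompactSupport φ ∧ tsupport φ ⊆ Ω

/-- `g` is the weak gradient of `u` on `Ω`:
`∫_Ω u ∇φ = −∫_Ω φ g` for all test functions `φ`. -/
def IsWeakGrad (Ω : Set (Euc N)) (u : Euc N → ℝ) (g : Euc N → Euc N) : Prop :=
  ∀ φ : Euc N → ℝ, IsTest Ω φ →
    (∫ x in Ω, u x • gradient φ x) = - ∫ x in Ω, φ x • g x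

/-- `d` is the weak divergence of the vector field `v` on `Ω`:
`∫_Ω v·∇φ = −∫_Ω d φ` for all test functions `φ`. -/
def IsWeakDiv (Ω : Set (Euc N)) (v : Euc N → Euc N) (d : Euc N → ℝ) : Prop :=
  ∀ φ : Euc N → ℝ, IsTest Ω φ →
    (∫ x in Ω, ⟪v x, gradient φ x⟫) = - ∫ x in Ω, d x * φ x

/-- `u ∈ H¹°₋₁(Ω)` with weak gradient `g`: `u ∈ L²₋₁(Ω)`, `g ∈ L²(Ω;ℝ^N)` is the weak
gradient of `u`, and `u` is approximated by test functions in the natural norms. -/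
def MemH10 (Ω : Set (Euc N)) (u : Euc N → ℝ) (g : Euc N → Euc N) : Prop :=
  MemL2 Ω (-1) u ∧ MemL2V Ω 0 g ∧ IsWeakGrad Ω u g ∧
    ∃ φ : ℕ → Euc N → ℝ, (∀ n, IsTest Ω (φ n)) ∧
      Tendsto (fun n => nrmL2 Ω (-1) (fun x => u x - φ n x)) atTop (𝓝 0) ∧
      Tendsto (fun n => nrmL2V Ω 0 (fun x => g x - gradient (φ n) x)) atTop (𝓝 0)

/-- `g ∈ 𝒢`, the closure in `L²(Ω;ℝ^N)` of `{∇φ : φ ∈ C_c^∞(Ω)}`. -/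
def MemG (Ω : Set (Euc N)) (g : Euc N → Euc N) : Prop :=
  MemL2V Ω 0 g ∧
    ∃ φ : ℕ → Euc N → ℝ, (∀ n, IsTest Ω (φ n)) ∧
      Tendsto (fun n => nrmL2V Ω 0 (fun x => g x - gradient (φ n) x)) atTop (𝓝 0)

/-- `ψ ∈ D₀`, the set of weakly divergence-free fields in `L²(Ω;ℝ^N)`. -/
def MemD0 (Ω : Set (Euc N)) (ψ : Euc N → Euc N) : Prop :=
  MemL2V Ω 0 ψ ∧
    ∀ φ : Euc N → ℝ, IsTest Ω φ → (∫ x in Ω, ⟪ψ x, gradient φ x⟫) = 0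

/-- The coefficient matrix field `A : Ω → ℝ^{N×N}`: measurable, essentially bounded,
symmetric, and uniformly coercive (`A(x)ξ·ξ ≥ α⁻²|ξ|²` for a.e. `x ∈ Ω`). -/
structure Coeff (N : ℕ) (Ω : Set (Euc N)) where
  A : Euc N → Euc N →L[ℝ] Euc N
  α : ℝ
  α_pos : 0 < α
  meas : ∀ ξ : Euc N, AEStronglyMeasurable (fun x => A x ξ) (volume.restrict Ω)
  bdd : ∃ C : ℝ, ∀ᵐ x ∂(volume.restrict Ω), ∀ ξ : Euc N, ‖A x ξ‖ ≤ C * ‖ξ‖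
  symm : ∀ x : Euc N, ∀ ξ η : Euc N, ⟪A x ξ, η⟫ = ⟪ξ, A x η⟫
  coer : ∀ᵐ x ∂(volume.restrict Ω), ∀ ξ : Euc N, α⁻¹ ^ 2 * ‖ξ‖ ^ 2 ≤ ⟪A x ξ, ξ⟫

/-- The weighted inner product `⟨v,w⟩_A = ∫_Ω A v · w dx`. -/
def ipA (Ω : Set (Euc N)) (A : Euc N → Euc N →L[ℝ] Euc N) (v w : Euc N → Euc N) : ℝ :=
  ∫ x in Ω, ⟪A x (v x), w x⟫

/-- The squared `A`-weighted norm `‖v‖²_A = ∫_Ω A v · v dx`. -/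
def sqA (Ω : Set (Euc N)) (A : Euc N → Euc N →L[ℝ] Euc N) (v : Euc N → Euc N) : ℝ :=
  ipA Ω A v v

/-- The `A`-weighted norm `‖v‖_A`. -/
def nrmA (Ω : Set (Euc N)) (A : Euc N → Euc N →L[ℝ] Euc N) (v : Euc N → Euc N) : ℝ :=
  Real.sqrt (sqA Ω A v)

/-- `w = A⁻¹ v` (a.e. on `Ω`), with `w ∈ L²(Ω;ℝ^N)`. -/
def IsAInv (Ω : Set (Euc N)) (A : Euc N → Euc N →L[ℝ] Euc N) (v w : Euc N → Euc N) : Prop :=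
  MemL2V Ω 0 w ∧ ∀ᵐ x ∂(volume.restrict Ω), A x (w x) = v x

lemma aux_cs {X E : Type*} [MeasurableSpace X] {μ : Measure X} [NormedAddCommGroup E]
    [InnerProductSpace ℝ E] {h k : X → E} (hh : MemLp h 2 μ) (hk : MemLp k 2 μ) :
    |∫ x, ⟪h x, k x⟫ ∂μ| ≤ Real.sqrt (∫ x, ‖h x‖ ^ 2 ∂μ) * Real.sqrt (∫ x, ‖k x‖ ^ 2 ∂μ) := by
  have h1 : |∫ x, ⟪h x, k x⟫ ∂μ| ≤ ∫ x, ‖h x‖ * ‖k x‖ ∂μ := by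
    rw [← Real.norm_eq_abs]
    refine norm_integral_le_of_norm_le ?_ (ae_of_all _ fun x => norm_inner_le_norm _ _)
    exact hh.norm.integrable_mul hk.norm
  have h2 := integral_mul_norm_le_Lp_mul_Lq (μ := μ) (f := h) (g := k)
    (Real.HolderConjugate.two_two) (by simpa using hh) (by simpa using hk)
  refine h1.trans (h2.trans (le_of_eq ?_))
  simp [Real.sqrt_eq_rpow]

lemma aux_int {X E : Type*} [MeasurableSpace X] {μ : Measure X} [NormedAddCommGroup E]
    [InnerProductSpace ℝ E] {h k : X → E} (hh : MemLp h 2 μ) (hk : MemLp k 2 μ) :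
    Integrable (fun x => ⟪h x, k x⟫) μ := by
  refine Integrable.mono' (hh.norm.integrable_mul hk.norm) (hh.1.inner hk.1)
    (ae_of_all _ fun x => norm_inner_le_norm _ _)

lemma aux_lim {X E : Type*} [MeasurableSpace X] {μ : Measure X} [NormedAddCommGroup E]
    [InnerProductSpace ℝ E] {h k : X → E} {p : ℕ → X → E} (hh : MemLp h 2 μ) (hk : MemLp k 2 μ)
    (hp : ∀ n, MemLp (p n) 2 μ)
    (ht : Tendsto (fun n => Real.sqrt (∫ x, ‖k x - p n x‖ ^ 2 ∂μ)) atTop (𝓝 0)) :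
    Tendsto (fun n => ∫ x, ⟪h x, p n x⟫ ∂μ) atTop (𝓝 (∫ x, ⟪h x, k x⟫ ∂μ)) := by
  rw [tendsto_iff_norm_sub_tendsto_zero]
  have ht' := ht.const_mul (Real.sqrt (∫ x, ‖h x‖ ^ 2 ∂μ))
  rw [mul_zero] at ht'
  refine squeeze_zero (fun _ => norm_nonneg _) (fun n => ?_) ht'
  have := aux_cs hh (hk.sub (hp n))
  rw [norm_sub_rev, ← integral_sub (aux_int hh hk) (aux_int hh (hp n)),
    Real.norm_eq_abs]
  simpa [inner_sub_right] using this

lemma aux_memV {Ω : Set (Euc N)} {v : Euc N → Euc N} (h : MemL2V Ω 0 v) :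
    MemLp v 2 (volume.restrict Ω) := by
  rw [memLp_two_iff_integrable_sq_norm h.1]
  simpa using h.2

lemma aux_A {Ω : Set (Euc N)} (M : Coeff N Ω) {v : Euc N → Euc N}
    (h : MemLp v 2 (volume.restrict Ω)) :
    MemLp (fun x => M.A x (v x)) 2 (volume.restrict Ω) := by
  obtain ⟨C, hC⟩ := M.bdd
  refine MemLp.of_le_mul (c := C) h ?_ ?_
  · have : (fun x => M.A x (v x)) = fun x => ∑ i, (⟪EuclideanSpace.basisFun (Fin N) ℝ i, v x⟫) •
        M.A x (EuclideanSpace.basisFun (Fin N) ℝ i) := by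
      ext1 x
      conv_lhs => rw [← (EuclideanSpace.basisFun (Fin N) ℝ).sum_repr' (v x)]
      simp only [map_sum, map_smul]
    rw [this]
    refine Finset.aestronglyMeasurable_fun_sum _ fun i _ => ?_
    exact (AEStronglyMeasurable.inner (𝕜 := ℝ) aestronglyMeasurable_const h.1).smul (M.meas _)
  · filter_upwards [hC] with x hx using hx _

lemma aux_grad {Ω : Set (Euc N)} {φ : Euc N → ℝ} (h : IsTest Ω φ) :
    MemLp (gradient φ) 2 (volume.restrict Ω) := by
  refine MemLp.restrict _ ?_
  have hc : Continuous (gradient φ) := by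
    have := h.1.continuous_fderiv (by simp)
    exact (InnerProductSpace.toDual ℝ (Euc N)).symm.continuous.comp this
  refine hc.memLp_of_hasCompactSupport ?_
  refine (h.2.1.fderiv (𝕜 := ℝ)).comp_left (g := (InnerProductSpace.toDual ℝ (Euc N)).symm) ?_
  simp

lemma aux_scal {Ω : Set (Euc N)} {s t : ℝ} (hst : t + t = s) {u : Euc N → ℝ} (h : MemL2 Ω s u) :
    MemLp (fun x => (1 + ‖x‖ ^ 2) ^ t * u x) 2 (volume.restrict Ω) := by
  have hc : Continuous fun x : Euc N => (1 + ‖x‖ ^ 2) ^ t :=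
    Continuous.rpow_const (by fun_prop) (fun x => Or.inl (by positivity))
  refine (memLp_two_iff_integrable_sq (hc.aestronglyMeasurable.mul h.1)).2 ?_
  refine h.2.congr (ae_of_all _ fun x => ?_)
  have : (0:ℝ) < 1 + ‖x‖ ^ 2 := by positivity
  simp only [Pi.mul_apply]
  rw [mul_pow, sq ((1 + ‖x‖ ^ 2) ^ t), ← Real.rpow_add this, hst]

lemma aux_test {Ω : Set (Euc N)} {t : ℝ} {φ : Euc N → ℝ} (h : IsTest Ω φ) :
    MemLp (fun x => (1 + ‖x‖ ^ 2) ^ t * φ x) 2 (volume.restrict Ω) := by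
  refine MemLp.restrict _ ?_
  have hc : Continuous fun x : Euc N => (1 + ‖x‖ ^ 2) ^ t :=
    Continuous.rpow_const (by fun_prop) (fun x => Or.inl (by positivity))
  exact (hc.mul h.1.continuous).memLp_of_hasCompactSupport (h.2.1.mul_left)

lemma aux_scal_lim {Ω : Set (Euc N)} {f u : Euc N → ℝ} (hf : MemL2 Ω 1 f) (hu : MemL2 Ω (-1) u)
    {φ : ℕ → Euc N → ℝ} (hφ : ∀ n, IsTest Ω (φ n))
    (ht : Tendsto (fun n => nrmL2 Ω (-1) (fun x => u x - φ n x)) atTop (𝓝 0)) :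
    Tendsto (fun n => ∫ x in Ω, f x * φ n x) atTop (𝓝 (∫ x in Ω, f x * u x)) := by
  have key := aux_lim (aux_scal (t := 1/2) (by norm_num) hf)
    (aux_scal (t := -(1/2)) (by norm_num) hu) (fun n => aux_test (t := -(1/2)) (hφ n)) ?_
  · have e : ∀ (x : Euc N) (a b : ℝ),
        ⟪(1 + ‖x‖ ^ 2) ^ (1/2 : ℝ) * a, (1 + ‖x‖ ^ 2) ^ (-(1/2) : ℝ) * b⟫ = a * b := by
      intro x a b
      have : (0:ℝ) < 1 + ‖x‖ ^ 2 := by positivity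
      have h1 : (1 + ‖x‖ ^ 2) ^ (1/2 : ℝ) * (1 + ‖x‖ ^ 2) ^ (-(1/2) : ℝ) = 1 := by
        rw [← Real.rpow_add this]; simp
      rw [real_inner_eq_re_inner ℝ]
      simp only [RCLike.inner_apply, conj_trivial, RCLike.re_to_real]
      linear_combination (a * b) * h1
    simpa only [e] using key
  · refine ht.congr fun n => ?_
    unfold nrmL2 sqL2
    congr 2
    ext1 x
    have : (0:ℝ) < 1 + ‖x‖ ^ 2 := by positivity
    rw [← mul_sub, Real.norm_eq_abs, sq_abs, mul_pow, sq ((1 + ‖x‖ ^ 2) ^ _), ← Real.rpow_add this]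
    norm_num

/-- Non-conforming minorant for the gradient part:
`‖g‖²_A ≥ 2∫ f u − ∫ A∇u·∇u − 2∫ ṽ·∇u` for all `u ∈ H¹°₋₁(Ω)`. -/
theorem stmt_13 (Ω : Set (Euc N)) (hΩ : IsOpen Ω) (hN : 3 ≤ N) (M : Coeff N Ω)
    (f : Euc N → ℝ) (hf : MemL2 Ω 1 f)
    (uh : Euc N → ℝ) (gu : Euc N → Euc N)
    (huh : MemL2 Ω (-1) uh) (hgu : MemL2V Ω 0 gu) (hguw : IsWeakGrad Ω uh gu)
    (hweak : ∀ φ : Euc N → ℝ, IsTest Ω φ →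
      (∫ x in Ω, ⟪M.A x (gu x), gradient φ x⟫) = ∫ x in Ω, f x * φ x)
    (vt : Euc N → Euc N) (hvt : MemL2V Ω 0 vt)
    (wt : Euc N → Euc N) (hwt : IsAInv Ω M.A vt wt)
    (g ψ : Euc N → Euc N) (hg : MemG Ω g) (hψ : MemD0 Ω ψ)
    (hdec : ∀ᵐ x ∂(volume.restrict Ω), M.A x ((gu x - wt x) - g x) = ψ x) :
    ∀ (u : Euc N → ℝ) (g' : Euc N → Euc N), MemH10 Ω u g' →
      2 * (∫ x in Ω, f x * u x) - (∫ x in Ω, ⟪M.A x (g' x), g' x⟫) -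
          2 * (∫ x in Ω, ⟪vt x, g' x⟫) ≤
        sqA Ω M.A g := by
  rintro u g' ⟨hu, hg', -, φ, hφ, hφu, hφg⟩
  have Lg' := aux_memV hg'
  have Lg := aux_memV hg.1
  have Lgu := aux_memV hgu
  have Lv := aux_memV hvt
  have Lψ := aux_memV hψ.1
  have hlim : ∀ h : Euc N → Euc N, MemLp h 2 (volume.restrict Ω) →
      Tendsto (fun n => ∫ x in Ω, ⟪h x, gradient (φ n) x⟫) atTop
        (𝓝 (∫ x in Ω, ⟪h x, g' x⟫)) := by
    intro h hh
    refine aux_lim hh Lg' (fun n => aux_grad (hφ n)) ?_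
    simpa [nrmL2V, sqL2V] using hφg
  have e1 : ∫ x in Ω, ⟪M.A x (gu x), g' x⟫ = ∫ x in Ω, f x * u x := by
    refine tendsto_nhds_unique (hlim _ (aux_A M Lgu)) ?_
    simp only [hweak _ (hφ _)]
    exact aux_scal_lim hf hu hφ hφu
  have e2 : ∫ x in Ω, ⟪ψ x, g' x⟫ = 0 := by
    refine tendsto_nhds_unique (hlim _ Lψ) ?_
    simp only [hψ.2 _ (hφ _)]
    exact tendsto_const_nhds
  have i1 := aux_int (aux_A M Lg) Lg'
  have i2 := aux_int Lv Lg'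
  have i3 := aux_int Lψ Lg'
  have i4 := aux_int (aux_A M Lg) Lg
  have i5 := aux_int (aux_A M Lg') Lg'
  have e3 : ∫ x in Ω, ⟪M.A x (gu x), g' x⟫ = (∫ x in Ω, ⟪M.A x (g x), g' x⟫) +
      (∫ x in Ω, ⟪vt x, g' x⟫) + ∫ x in Ω, ⟪ψ x, g' x⟫ := by
    rw [← integral_add i1 i2, ← integral_add (i1.fun_add i2) i3]
    refine integral_congr_ae ?_
    filter_upwards [hdec, hwt.2] with x h1 h2
    rw [← h1, ← h2, ← inner_add_left, ← inner_add_left]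
    simp only [map_sub]
    congr 1
    abel
  have e4 : 0 ≤ ∫ x in Ω, ((⟪M.A x (g x), g x⟫ + ⟪M.A x (g' x), g' x⟫) -
      2 * ⟪M.A x (g x), g' x⟫) := by
    refine integral_nonneg_of_ae ?_
    filter_upwards [M.coer] with x hx
    have h1 := hx (g x - g' x)
    have h2 : 0 ≤ M.α⁻¹ ^ 2 * ‖g x - g' x‖ ^ 2 := by positivity
    have h3 : ⟪M.A x (g' x), g x⟫ = ⟪M.A x (g x), g' x⟫ := by
      rw [M.symm, real_inner_comm]
    simp only [map_sub, inner_sub_left, inner_sub_right] at h1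
    simp only [Pi.zero_apply]
    linarith
  rw [integral_sub (i4.fun_add i5) (i1.const_mul 2), integral_add i4 i5, integral_const_mul] at e4
  unfold sqA ipA
  linarith
end
end

section
/- Sharpness of the non-conforming lower bound: let ṽ ∈ L²(Ω;ℝ^N), E := ∇û − A^{−1}ṽ with Helmholtz decomposition E = g + A^{−1}ψ, g ∈ 𝒢, ψ ∈ D₀. Then (i) there exists φ* ∈ H¹°₋₁(Ω) with ∇φ* = g and M₋(A^{−1}ṽ, φ*) = 2∫_Ω f φ* dx − ∫_Ω A∇φ*·∇φ* dx − 2∫_Ω ṽ·∇φ* dx = ‖g‖²_A; (ii) for every u ∈ L²₋₁(Ω) with weak gradient in L²(Ω;ℝ^N) such that û − u ∈ H¹°₋₁(Ω), the choice v = ψ gives M̃₋(A^{−1}ṽ, A^{−1}ψ, ∇u) = ∫_Ω (2∇u − A^{−1}(2ṽ + ψ))·ψ dx = ‖A^{−1}ψ‖²_A. Consequently the sum of these two attained lower bounds equals ‖∇û − A^{−1}ṽ‖²_A. -/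
open MeasureTheory Filter Topology
open scoped RealInnerProductSpace

noncomputable section

variable {N : ℕ}

section Helpers
variable {X : Type*} [MeasurableSpace X] {μ : Measure X}
variable {E : Type*} [NormedAddCommGroup E] [InnerProductSpace ℝ E]

lemma aux_norm_toLp {v : X → E} (hv : MemLp v 2 μ) :
    ‖hv.toLp v‖ = Real.sqrt (∫ x, ‖v x‖ ^ 2 ∂μ) := by
  have h : ‖hv.toLp v‖ ^ 2 = ∫ x, ‖v x‖ ^ 2 ∂μ := by
    rw [← real_inner_self_eq_norm_sq, L2.inner_def]
    apply integral_congr_ae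
    filter_upwards [hv.coeFn_toLp] with x hx
    rw [hx, real_inner_self_eq_norm_sq]
  rw [← h, Real.sqrt_sq (norm_nonneg _)]

lemma aux_inner_toLp {v w : X → E} (hv : MemLp v 2 μ) (hw : MemLp w 2 μ) :
    ⟪hv.toLp v, hw.toLp w⟫ = ∫ x, ⟪v x, w x⟫ ∂μ := by
  rw [L2.inner_def]
  apply integral_congr_ae
  filter_upwards [hv.coeFn_toLp, hw.coeFn_toLp] with x hx hy
  rw [hx, hy]

lemma aux_int_inner {v w : X → E} (hv : MemLp v 2 μ) (hw : MemLp w 2 μ) :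
    Integrable (fun x => ⟪v x, w x⟫) μ := by
  refine (L2.integrable_inner (𝕜 := ℝ) (hv.toLp v) (hw.toLp w)).congr ?_
  filter_upwards [hv.coeFn_toLp, hw.coeFn_toLp] with x hx hy
  rw [hx, hy]

lemma aux_tendsto_toLp {v : X → E} {vn : ℕ → X → E} (hv : MemLp v 2 μ)
    (hvn : ∀ n, MemLp (vn n) 2 μ)
    (h : Tendsto (fun n => Real.sqrt (∫ x, ‖v x - vn n x‖ ^ 2 ∂μ)) atTop (𝓝 0)) :
    Tendsto (fun n => (hvn n).toLp (vn n)) atTop (𝓝 (hv.toLp v)) := by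
  rw [tendsto_iff_norm_sub_tendsto_zero]
  refine h.congr fun n => ?_
  rw [norm_sub_rev, ← MemLp.toLp_sub, aux_norm_toLp]
  rfl

lemma aux_lim_s15 {v w : X → E} {vn : ℕ → X → E} (hv : MemLp v 2 μ) (hw : MemLp w 2 μ)
    (hvn : ∀ n, MemLp (vn n) 2 μ)
    (h : Tendsto (fun n => Real.sqrt (∫ x, ‖v x - vn n x‖ ^ 2 ∂μ)) atTop (𝓝 0)) :
    Tendsto (fun n => ∫ x, ⟪w x, vn n x⟫ ∂μ) atTop (𝓝 (∫ x, ⟪w x, v x⟫ ∂μ)) := by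
  have h1 := aux_tendsto_toLp hv hvn h
  have h2 := (tendsto_const_nhds (x := hw.toLp w)).inner (𝕜 := ℝ) h1
  rw [aux_inner_toLp] at h2
  exact h2.congr fun n => aux_inner_toLp _ _

lemma aux_complete [CompleteSpace E] {F : Type*} [NormedAddCommGroup F] [InnerProductSpace ℝ F]
    {v : X → F} {vn : ℕ → X → F} {un : ℕ → X → E} (hv : MemLp v 2 μ)
    (hvn : ∀ n, MemLp (vn n) 2 μ) (hun : ∀ n, MemLp (un n) 2 μ)
    (hle : ∀ n m, ∫ x, ‖un n x - un m x‖ ^ 2 ∂μ ≤ 4 * ∫ x, ‖vn n x - vn m x‖ ^ 2 ∂μ)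
    (h : Tendsto (fun n => Real.sqrt (∫ x, ‖v x - vn n x‖ ^ 2 ∂μ)) atTop (𝓝 0)) :
    ∃ u : X → E, MemLp u 2 μ ∧
      Tendsto (fun n => Real.sqrt (∫ x, ‖u x - un n x‖ ^ 2 ∂μ)) atTop (𝓝 0) := by
  have h1 := (aux_tendsto_toLp hv hvn h).cauchySeq
  have hd : ∀ n m, dist ((hun n).toLp (un n)) ((hun m).toLp (un m)) ≤
      2 * dist ((hvn n).toLp (vn n)) ((hvn m).toLp (vn m)) := by
    intro n m
    rw [dist_eq_norm, dist_eq_norm, ← MemLp.toLp_sub, ← MemLp.toLp_sub, aux_norm_toLp,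
      aux_norm_toLp]
    apply Real.sqrt_le_iff.2 ⟨by positivity, ?_⟩
    rw [mul_pow, Real.sq_sqrt (integral_nonneg fun x => by positivity)]
    have := hle n m
    simp only [Pi.sub_apply]
    linarith
  have h2 : CauchySeq (fun n => (hun n).toLp (un n)) := by
    rw [Metric.cauchySeq_iff] at h1 ⊢
    intro ε hε
    obtain ⟨K, hK⟩ := h1 (ε / 2) (by positivity)
    refine ⟨K, fun m hm n hn => ?_⟩
    have := hK m hm n hn
    have := hd m n
    linarith
  obtain ⟨u, hu⟩ := cauchySeq_tendsto_of_complete h2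
  refine ⟨u, Lp.memLp u, ?_⟩
  rw [tendsto_iff_norm_sub_tendsto_zero] at hu
  refine hu.congr fun n => ?_
  have e : u = (Lp.memLp u).toLp u := (Lp.toLp_coeFn u (Lp.memLp u)).symm
  conv_lhs => rw [e]
  rw [norm_sub_rev, ← MemLp.toLp_sub, aux_norm_toLp]
  rfl

lemma aux_lin {a b c : X → ℝ} (ha : Integrable a μ) (hb : Integrable b μ) (hc : Integrable c μ)
    (r s : ℝ) : ∫ x, (a x + r * b x + s * c x) ∂μ =
      ∫ x, a x ∂μ + r * ∫ x, b x ∂μ + s * ∫ x, c x ∂μ := by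
  have h1 : Integrable (fun x => a x + r * b x) μ := ha.add (hb.const_mul r)
  rw [integral_add h1 (hc.const_mul s), integral_add ha (hb.const_mul r), integral_const_mul,
    integral_const_mul]

end Helpers

section Test
variable {Ω : Set (Euc N)}

def wgt (x : Euc N) : ℝ := Real.sqrt (1 + ‖x‖ ^ 2)

lemma wgt_pos (x : Euc N) : 0 < wgt x := Real.sqrt_pos.2 (by positivity)
lemma wgt_sq (x : Euc N) : wgt x ^ 2 = 1 + ‖x‖ ^ 2 := Real.sq_sqrt (by positivity)
lemma wgt_cont : Continuous (wgt (N := N)) := by unfold wgt; fun_prop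

lemma memL2V_iff {v : Euc N → Euc N} : MemL2V Ω 0 v ↔ MemLp v 2 (volume.restrict Ω) := by
  unfold MemL2V
  simp only [Real.rpow_zero, one_mul]
  constructor
  · rintro ⟨h1, h2⟩
    exact (memLp_two_iff_integrable_sq_norm h1).2 h2
  · intro h
    exact ⟨h.1, (memLp_two_iff_integrable_sq_norm h.1).1 h⟩

lemma nrmL2V_eq {v : Euc N → Euc N} : nrmL2V Ω 0 v = Real.sqrt (∫ x in Ω, ‖v x‖ ^ 2) := by
  unfold nrmL2V sqL2V
  simp only [Real.rpow_zero, one_mul]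

lemma wneg (x : Euc N) (t : ℝ) : (1 + ‖x‖ ^ 2) ^ (-1 : ℝ) * t ^ 2 = ‖(wgt x)⁻¹ * t‖ ^ 2 := by
  rw [Real.rpow_neg_one, Real.norm_eq_abs, sq_abs, mul_pow, inv_pow, wgt_sq]

lemma wpos (x : Euc N) (t : ℝ) : (1 + ‖x‖ ^ 2) ^ (1 : ℝ) * t ^ 2 = ‖(wgt x) * t‖ ^ 2 := by
  rw [Real.rpow_one, Real.norm_eq_abs, sq_abs, mul_pow, wgt_sq]

lemma test_grad_cont {φ : Euc N → ℝ} (h : IsTest Ω φ) : Continuous (gradient φ) := by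
  unfold gradient
  exact (LinearIsometryEquiv.continuous _).comp (h.1.continuous_fderiv (by simp))

lemma grad_zero {φ : Euc N → ℝ} {x : Euc N} (hx : x ∉ tsupport φ) : gradient φ x = 0 := by
  have : fderiv ℝ φ x = 0 := by
    by_contra h
    exact hx (support_fderiv_subset ℝ h)
  simp [gradient, this]

lemma test_grad_supp {φ : Euc N → ℝ} (h : IsTest Ω φ) : HasCompactSupport (gradient φ) :=
  HasCompactSupport.intro h.2.1 fun _ hx => grad_zero hx

lemma test_sub {φ η : Euc N → ℝ} (h : IsTest Ω φ) (h' : IsTest Ω η) :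
    IsTest Ω (fun x => φ x - η x) := by
  refine ⟨h.1.sub h'.1, ?_, ?_⟩
  · exact h.2.1.sub h'.2.1
  · exact (tsupport_sub φ η).trans (Set.union_subset h.2.2 h'.2.2)

lemma grad_sub {φ η : Euc N → ℝ} (h : IsTest Ω φ) (h' : IsTest Ω η) (x : Euc N) :
    gradient (fun x => φ x - η x) x = gradient φ x - gradient η x := by
  unfold gradient
  rw [fderiv_fun_sub (h.1.differentiable (by simp) x) (h'.1.differentiable (by simp) x), map_sub]

lemma test_grad_memLp {φ : Euc N → ℝ} (h : IsTest Ω φ) :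
    MemLp (gradient φ) 2 (volume.restrict Ω) :=
  (test_grad_cont h).memLp_of_hasCompactSupport (test_grad_supp h)

/-- Euler-type integration by parts. -/
lemma euler {h : Euc N → ℝ} (h1 : ContDiff ℝ 1 h) (h2 : HasCompactSupport h) :
    ∫ x, fderiv ℝ h x x = - (N * ∫ x, h x) := by
  have hc : Continuous (fderiv ℝ h) := h1.continuous_fderiv (by simp)
  have hcs : HasCompactSupport (fderiv ℝ h) := h2.fderiv ℝ
  have key : ∀ i : Fin N, ∫ x : Euc N, x i * fderiv ℝ h x (EuclideanSpace.single i 1) =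
      - ∫ x, h x := by
    intro i
    have hd : ∀ x : Euc N, HasFDerivAt (fun x : Euc N => x i)
        (EuclideanSpace.proj i : Euc N →L[ℝ] ℝ) x := fun x =>
      (EuclideanSpace.proj i : Euc N →L[ℝ] ℝ).hasFDerivAt
    have hf : ∀ x : Euc N, fderiv ℝ (fun x : Euc N => x i) x (EuclideanSpace.single i 1) = 1 := by
      intro x
      rw [(hd x).fderiv]; simp
    have := integral_mul_fderiv_eq_neg_fderiv_mul_of_integrable (μ := (volume : Measure (Euc N)))
      (f := fun x : Euc N => x i) (g := h) (v := EuclideanSpace.single i 1) ?_ ?_ ?_ ?_ ?_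
    · rw [this]; simp [hf]
    · simp only [hf, one_mul]
      exact h1.continuous.integrable_of_hasCompactSupport h2
    · refine Continuous.integrable_of_hasCompactSupport (by fun_prop) ?_
      exact (h2.fderiv_apply ℝ _).mul_left
    · refine Continuous.integrable_of_hasCompactSupport
        (Continuous.mul (by fun_prop) h1.continuous) h2.mul_left
    · intro x _; exact (hd x).differentiableAt
    · intro x _; exact h1.differentiable (by simp) x
  have e : ∀ x : Euc N, fderiv ℝ h x x =
      ∑ i, x i * fderiv ℝ h x (EuclideanSpace.single i 1) := by
    intro x
    have : x = ∑ i, x i • EuclideanSpace.single i (1 : ℝ) := by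
      ext j; simp [Finset.sum_apply, Pi.single_apply]
    have h3 := congrArg (fderiv ℝ h x) this
    rw [map_sum] at h3
    simpa using h3
  simp_rw [e]
  rw [integral_finsetSum]
  · simp [key]
  · intro i _
    refine Continuous.integrable_of_hasCompactSupport (by fun_prop) ?_
    exact (h2.fderiv_apply ℝ _).mul_left

lemma hardy (hN : 3 ≤ N) {φ : Euc N → ℝ} (h : IsTest Ω φ) :
    ∫ x, ‖(wgt x)⁻¹ * φ x‖ ^ 2 ≤ 4 * ∫ x, ‖gradient φ x‖ ^ 2 := by
  have hφ : ContDiff ℝ 1 φ := h.1.of_le (by simp)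
  set k : Euc N → ℝ := fun x => (φ x) ^ 2 * (1 + ‖x‖ ^ 2)⁻¹ with hk
  have hk1 : ContDiff ℝ 1 k := by
    refine (hφ.pow 2).mul (ContDiff.inv ?_ fun x => by positivity)
    exact contDiff_const.add (contDiff_id.norm_sq ℝ)
  have hk2 : HasCompactSupport k := by
    refine HasCompactSupport.intro h.2.1 fun x hx => ?_
    simp [hk, image_eq_zero_of_notMem_tsupport hx]
  have e1 : ∀ x, ‖(wgt x)⁻¹ * φ x‖ ^ 2 = k x := by
    intro x
    rw [Real.norm_eq_abs, sq_abs, mul_pow, inv_pow, wgt_sq, mul_comm]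
  have hgi : Integrable (fun x => ‖gradient φ x‖ ^ 2) := by
    have := (test_grad_cont h).memLp_of_hasCompactSupport (test_grad_supp h)
      (μ := (volume : Measure (Euc N))) (p := 2)
    exact (memLp_two_iff_integrable_sq_norm this.1).1 this
  have hki : Integrable k := hk1.continuous.integrable_of_hasCompactSupport hk2
  have hdi : Integrable (fun x => fderiv ℝ k x x) := by
    refine Continuous.integrable_of_hasCompactSupport
      ((hk1.continuous_fderiv (by simp)).clm_apply continuous_id) ?_
    refine HasCompactSupport.intro hk2 fun x hx => ?_
    have : fderiv ℝ k x = 0 := by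
      by_contra h
      exact hx (support_fderiv_subset ℝ h)
    simp [this]
  have hd : ∀ x, fderiv ℝ k x x = 2 * φ x * ⟪gradient φ x, x⟫ * (1 + ‖x‖ ^ 2)⁻¹ -
      φ x ^ 2 * (2 * ‖x‖ ^ 2) * ((1 + ‖x‖ ^ 2)⁻¹) ^ 2 := by
    intro x
    have a1 : HasFDerivAt φ (fderiv ℝ φ x) x := (hφ.differentiable (by simp) x).hasFDerivAt
    have a2 : HasFDerivAt (fun x : Euc N => 1 + ‖x‖ ^ 2) _ x :=
      (hasStrictFDerivAt_norm_sq x).hasFDerivAt.const_add 1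
    have a3 := (hasDerivAt_inv (x := 1 + ‖x‖ ^ 2) (by positivity)).comp_hasFDerivAt x a2
    have a4 := (a1.pow 2).mul a3
    have a5 : fderiv ℝ k x = _ := a4.fderiv
    rw [a5, inner_gradient_left]
    simp
    ring
  have hpt : ∀ x, 2⁻¹ * k x - 2 * ‖gradient φ x‖ ^ 2 ≤ fderiv ℝ k x x + N * k x := by
    intro x
    rw [hd x]
    simp only [hk]
    set t := (1 + ‖x‖ ^ 2)⁻¹ with ht
    have ht0 : 0 < t := by positivity
    have htr : t * ‖x‖ ^ 2 = 1 - t := by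
      rw [ht]; field_simp; ring
    have hcs : |⟪gradient φ x, x⟫| ≤ ‖gradient φ x‖ * ‖x‖ := abs_real_inner_le_norm _ _
    set a := ⟪gradient φ x, x⟫
    set G := ‖gradient φ x‖
    have ha : a ^ 2 * t ≤ G ^ 2 := by
      have : a ^ 2 ≤ (G * ‖x‖) ^ 2 := by
        rw [← sq_abs]; gcongr
      calc a ^ 2 * t ≤ (G * ‖x‖) ^ 2 * t := by gcongr
        _ = G ^ 2 * (1 - t) := by rw [← htr]; ring
        _ ≤ G ^ 2 := by nlinarith [sq_nonneg G]
    have hN' : (3 : ℝ) ≤ N := by exact_mod_cast hN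
    have h3 : 3 * (φ x ^ 2 * t) ≤ N * (φ x ^ 2 * t) := by gcongr
    have h4 : φ x ^ 2 * (2 * ‖x‖ ^ 2) * t ^ 2 ≤ 2 * (φ x ^ 2 * t) := by
      have : φ x ^ 2 * (2 * ‖x‖ ^ 2) * t ^ 2 = 2 * (φ x ^ 2 * t) * (t * ‖x‖ ^ 2) := by ring
      rw [this, htr]
      have : 0 ≤ 2 * (φ x ^ 2 * t) * t := by positivity
      linarith
    nlinarith [mul_nonneg ht0.le (sq_nonneg (φ x + 2 * a))]
  have hint := integral_mono (μ := (volume : Measure (Euc N)))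
    ((hki.const_mul 2⁻¹).sub (hgi.const_mul 2)) (hdi.add (hki.const_mul (N : ℝ))) hpt
  simp only [Pi.sub_apply, Pi.add_apply] at hint
  rw [integral_sub (hki.const_mul 2⁻¹) (hgi.const_mul 2), integral_add hdi (hki.const_mul _),
    integral_const_mul, integral_const_mul, integral_const_mul, euler hk1 hk2] at hint
  simp_rw [e1]
  linarith

end Test

section Main
variable {Ω : Set (Euc N)}

lemma test_ibp {φ η : Euc N → ℝ} (h : IsTest Ω φ) (h' : IsTest Ω η) (c : Euc N) :
    ∫ x in Ω, ⟪c, gradient η x⟫ * φ x = - ∫ x in Ω, ⟪η x • c, gradient φ x⟫ := by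
  rw [setIntegral_eq_integral_of_forall_compl_eq_zero,
    setIntegral_eq_integral_of_forall_compl_eq_zero]
  · have := integral_mul_fderiv_eq_neg_fderiv_mul_of_integrable (μ := (volume : Measure (Euc N)))
      (f := φ) (g := η) (v := c) ?_ ?_ ?_ ?_ ?_
    · have e1 : ∀ x, ⟪c, gradient η x⟫ * φ x = φ x * fderiv ℝ η x c := fun x => by
        rw [real_inner_comm, inner_gradient_left, mul_comm]
      have e2 : ∀ x, ⟪η x • c, gradient φ x⟫ = fderiv ℝ φ x c * η x := fun x => by
        rw [real_inner_comm, inner_smul_right, inner_gradient_left, mul_comm]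
      simp only [e1, e2]
      exact this
    · refine Continuous.integrable_of_hasCompactSupport
        (((h.1.continuous_fderiv (by simp)).clm_apply continuous_const).mul h'.1.continuous)
        h'.2.1.mul_left
    · refine Continuous.integrable_of_hasCompactSupport
        (h.1.continuous.mul ((h'.1.continuous_fderiv (by simp)).clm_apply continuous_const))
        h.2.1.mul_right
    · exact Continuous.integrable_of_hasCompactSupport
        (h.1.continuous.mul h'.1.continuous) h.2.1.mul_right
    · intro x _; exact h.1.differentiable (by simp) x
    · intro x _; exact h'.1.differentiable (by simp) x
  · intro x hx
    rw [grad_zero fun h0 => hx (h.2.2 h0)]; simp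
  · intro x hx
    rw [grad_zero fun h0 => hx (h'.2.2 h0)]; simp

lemma test_w_memLp {φ : Euc N → ℝ} (h : IsTest Ω φ) :
    MemLp (fun x => (wgt x)⁻¹ * φ x) 2 (volume.restrict Ω) :=
  Continuous.memLp_of_hasCompactSupport
    ((wgt_cont.inv₀ fun x => (wgt_pos x).ne').mul h.1.continuous) h.2.1.mul_left

lemma hardy_set (hN : 3 ≤ N) {φ : Euc N → ℝ} (h : IsTest Ω φ) :
    ∫ x in Ω, ‖(wgt x)⁻¹ * φ x‖ ^ 2 ≤ 4 * ∫ x in Ω, ‖gradient φ x‖ ^ 2 := by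
  rw [setIntegral_eq_integral_of_forall_compl_eq_zero,
    setIntegral_eq_integral_of_forall_compl_eq_zero]
  · exact hardy hN h
  · intro x hx
    rw [grad_zero fun h0 => hx (h.2.2 h0)]; simp
  · intro x hx
    rw [image_eq_zero_of_notMem_tsupport fun h0 => hx (h.2.2 h0)]; simp

lemma aux_i1 {u η : Euc N → ℝ} (hu : MemLp u 2 (volume.restrict Ω)) (hη : IsTest Ω η) :
    Integrable (fun x => (wgt x * u x) • gradient η x) (volume.restrict Ω) := by
  have hm : MemLp (fun x => wgt x • gradient η x) 2 (volume.restrict Ω) :=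
    Continuous.memLp_of_hasCompactSupport (wgt_cont.smul (test_grad_cont hη))
      (HasCompactSupport.intro hη.2.1 fun x hx => by rw [grad_zero hx, smul_zero])
  have h : Integrable (fun x => u x • (wgt x • gradient η x)) (volume.restrict Ω) := by
    rw [← memLp_one_iff_integrable]
    exact hm.smul hu
  refine h.congr (Eventually.of_forall fun x => ?_)
  simp only [smul_smul]
  rw [mul_comm]

lemma aux_i2 {η : Euc N → ℝ} {g : Euc N → Euc N} (hg : MemLp g 2 (volume.restrict Ω))
    (hη : IsTest Ω η) : Integrable (fun x => η x • g x) (volume.restrict Ω) := by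
  have hm : MemLp η 2 (volume.restrict Ω) :=
    Continuous.memLp_of_hasCompactSupport hη.1.continuous hη.2.1
  rw [← memLp_one_iff_integrable]
  exact hg.smul hm

lemma potential (hN : 3 ≤ N) {g : Euc N → Euc N} (hg : MemG Ω g) :
    ∃ (φs : Euc N → ℝ) (φ : ℕ → Euc N → ℝ), MemH10 Ω φs g ∧ (∀ n, IsTest Ω (φ n)) ∧
      Tendsto (fun n => Real.sqrt (∫ x in Ω, ‖g x - gradient (φ n) x‖ ^ 2)) atTop (𝓝 0) ∧
      ∀ f : Euc N → ℝ, MemLp (fun x => wgt x * f x) 2 (volume.restrict Ω) →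
        Tendsto (fun n => ∫ x in Ω, f x * φ n x) atTop (𝓝 (∫ x in Ω, f x * φs x)) := by
  obtain ⟨hg1, φ, hφ, hlim⟩ := hg
  have hg2 := memL2V_iff.1 hg1
  simp only [nrmL2V_eq] at hlim
  have hun := fun n => test_w_memLp (hφ n)
  have hvn := fun n => test_grad_memLp (hφ n)
  obtain ⟨u, hu, hul⟩ := aux_complete hg2 hvn hun (by
    intro n m
    have := hardy_set hN (test_sub (hφ n) (hφ m))
    simp only [grad_sub (hφ n) (hφ m), mul_sub] at this
    exact this) hlim
  have hw : ∀ x, (wgt x)⁻¹ * (wgt x * u x) = u x := fun x => by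
    rw [← mul_assoc, inv_mul_cancel₀ (wgt_pos x).ne', one_mul]
  have hf : ∀ f : Euc N → ℝ, MemLp (fun x => wgt x * f x) 2 (volume.restrict Ω) →
        Tendsto (fun n => ∫ x in Ω, f x * φ n x) atTop
          (𝓝 (∫ x in Ω, f x * (wgt x * u x))) := by
    intro f hf
    have := aux_lim_s15 hu hf hun hul
    have e1 : ∀ x, ⟪wgt x * f x, u x⟫ = f x * (wgt x * u x) := fun x => by
      simp; ring
    have e2 : ∀ n x, ⟪wgt x * f x, (wgt x)⁻¹ * φ n x⟫ = f x * φ n x := fun n x => by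
      have := (wgt_pos x).ne'
      simp; field_simp
    simpa only [e1, e2] using this
  have hsm : AEStronglyMeasurable (fun x => wgt x * u x) (volume.restrict Ω) :=
    wgt_cont.aestronglyMeasurable.mul hu.1
  refine ⟨fun x => wgt x * u x, φ, ⟨⟨hsm, ?_⟩, hg1, ?_, φ, hφ, ?_, ?_⟩, hφ, hlim, hf⟩
  · simp only [wneg, hw]
    exact (memLp_two_iff_integrable_sq_norm hu.1).1 hu
  · intro η hη
    have i1 := aux_i1 hu hη
    have i2 := aux_i2 hg2 hη
    refine ext_inner_left ℝ fun c => ?_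
    rw [inner_neg_right, ← integral_inner i1, ← integral_inner i2]
    have t1 := hf (fun x => ⟪c, gradient η x⟫) (by
      refine Continuous.memLp_of_hasCompactSupport (wgt_cont.mul
        (continuous_const.inner (test_grad_cont hη))) ?_
      refine HasCompactSupport.intro hη.2.1 fun x hx => ?_
      rw [grad_zero hx]; simp)
    have t2 := (aux_lim_s15 (w := fun x => η x • c) hg2 (by
      exact Continuous.memLp_of_hasCompactSupport (hη.1.continuous.smul continuous_const)
        hη.2.1.smul_right) hvn hlim).neg
    have := tendsto_nhds_unique t1 (t2.congr fun n => (test_ibp (hφ n) hη c).symm)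
    simp only [inner_smul_right]
    simp only [real_inner_smul_left] at this
    rw [← this]
    exact integral_congr_ae (Eventually.of_forall fun x => mul_comm _ _)
  · refine hul.congr fun n => ?_
    simp only [nrmL2, sqL2, wneg, mul_sub, hw]
  · simpa only [nrmL2V_eq] using hlim

lemma A_memLp (M : Coeff N Ω) {v : Euc N → Euc N} (hv : MemLp v 2 (volume.restrict Ω)) :
    MemLp (fun x => M.A x (v x)) 2 (volume.restrict Ω) := by
  obtain ⟨C, hC⟩ := M.bdd
  refine hv.of_le_mul (c := C) ?_ (hC.mono fun x hx => hx _)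
  have e : (fun x => M.A x (v x)) =
      fun x => ∑ i, (v x) i • M.A x (EuclideanSpace.single i 1) := by
    ext1 x
    have : v x = ∑ i, (v x) i • EuclideanSpace.single i (1 : ℝ) := by
      ext j; simp [Finset.sum_apply, Pi.single_apply]
    have h3 := congrArg (M.A x) this
    rw [map_sum] at h3
    simpa only [map_smul] using h3
  rw [e]
  refine Finset.aestronglyMeasurable_fun_sum _ fun i _ => ?_
  have h1 : AEStronglyMeasurable (fun x => (v x) i) (volume.restrict Ω) :=
    (EuclideanSpace.proj i : Euc N →L[ℝ] ℝ).continuous.comp_aestronglyMeasurable hv.1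
  exact h1.smul (M.meas _)

lemma orth {ψ g : Euc N → Euc N} (hψ : MemD0 Ω ψ) (hg : MemG Ω g) :
    ∫ x in Ω, ⟪ψ x, g x⟫ = 0 := by
  obtain ⟨hg1, φ, hφ, hlim⟩ := hg
  simp only [nrmL2V_eq] at hlim
  have := aux_lim_s15 (memL2V_iff.1 hg1) (memL2V_iff.1 hψ.1) (fun n => test_grad_memLp (hφ n)) hlim
  refine tendsto_nhds_unique this ?_
  simp only [hψ.2 _ (hφ _)]
  exact tendsto_const_nhds

end Main

/-- Sharpness of the non-conforming lower bound: the gradient part is attained at `φ*` with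
`∇φ* = g`, the solenoidal part at `v = ψ` (where `A⁻¹ψ = E − g` a.e.), and the two attained
bounds sum to `‖E‖²_A`. -/
theorem stmt_15 (Ω : Set (Euc N)) (hΩ : IsOpen Ω) (hN : 3 ≤ N) (M : Coeff N Ω)
    (f : Euc N → ℝ) (hf : MemL2 Ω 1 f)
    (uh : Euc N → ℝ) (gu : Euc N → Euc N)
    (huh : MemL2 Ω (-1) uh) (hgu : MemL2V Ω 0 gu) (hguw : IsWeakGrad Ω uh gu)
    (hweak : ∀ φ : Euc N → ℝ, IsTest Ω φ →
      (∫ x in Ω, ⟪M.A x (gu x), gradient φ x⟫) = ∫ x in Ω, f x * φ x)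
    (vt : Euc N → Euc N) (hvt : MemL2V Ω 0 vt)
    (wt : Euc N → Euc N) (hwt : IsAInv Ω M.A vt wt)
    (g ψ : Euc N → Euc N) (hg : MemG Ω g) (hψ : MemD0 Ω ψ)
    (hdec : ∀ᵐ x ∂(volume.restrict Ω), M.A x ((gu x - wt x) - g x) = ψ x) :
    (∃ φs : Euc N → ℝ, MemH10 Ω φs g ∧
      2 * (∫ x in Ω, f x * φs x) - (∫ x in Ω, ⟪M.A x (g x), g x⟫) -
          2 * (∫ x in Ω, ⟪vt x, g x⟫) =
        sqA Ω M.A g) ∧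
    (∀ (u : Euc N → ℝ) (gu' : Euc N → Euc N),
      MemL2 Ω (-1) u → MemL2V Ω 0 gu' → IsWeakGrad Ω u gu' →
      MemH10 Ω (fun x => uh x - u x) (fun x => gu x - gu' x) →
      (∫ x in Ω, ⟪(2 : ℝ) • gu' x - ((2 : ℝ) • wt x + ((gu x - wt x) - g x)), ψ x⟫) =
        sqA Ω M.A (fun x => (gu x - wt x) - g x)) ∧
    sqA Ω M.A g + sqA Ω M.A (fun x => (gu x - wt x) - g x) =
      sqA Ω M.A (fun x => gu x - wt x) := by
  have hg2 := memL2V_iff.1 hg.1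
  have hgu2 := memL2V_iff.1 hgu
  have hvt2 := memL2V_iff.1 hvt
  have hwt2 := memL2V_iff.1 hwt.1
  have hψ2 := memL2V_iff.1 hψ.1
  have hh2 : MemLp (fun x => (gu x - wt x) - g x) 2 (volume.restrict Ω) := (hgu2.sub hwt2).sub hg2
  have hAg := A_memLp M hg2
  have hAgu := A_memLp M hgu2
  have hAh := A_memLp M hh2
  have o1 := orth hψ hg
  refine ⟨?_, ?_, ?_⟩
  · obtain ⟨φs, φ, hφs, hφ, hlim, hfl⟩ := potential hN hg
    refine ⟨φs, hφs, ?_⟩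
    have t1 := hfl f ((memLp_two_iff_integrable_sq_norm
      (wgt_cont.aestronglyMeasurable.mul hf.1)).2 (by
        have h0 := hf.2
        simp only [wpos] at h0
        exact h0))
    have t2 := aux_lim_s15 hg2 hAgu (fun n => test_grad_memLp (hφ n)) hlim
    have e1 := tendsto_nhds_unique t1 (t2.congr fun n => hweak _ (hφ n))
    have e2 : ∫ x in Ω, ⟪M.A x (gu x), g x⟫ =
        ∫ x in Ω, (⟪vt x, g x⟫ + 1 * ⟪M.A x (g x), g x⟫ + 1 * ⟪ψ x, g x⟫) := by
      apply integral_congr_ae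
      filter_upwards [hdec, hwt.2] with x hx hy
      rw [← hx, ← hy, map_sub, map_sub]
      simp only [inner_sub_left]
      ring
    rw [aux_lin (aux_int_inner hvt2 hg2) (aux_int_inner hAg hg2) (aux_int_inner hψ2 hg2),
      o1] at e2
    rw [e1, e2]
    unfold sqA ipA
    ring
  · intro u gu' hu hgu' hw hH
    have o2 := orth hψ ⟨hH.2.1, hH.2.2.2.imp fun φ h => ⟨h.1, h.2.2⟩⟩
    have hd2 := memL2V_iff.1 hH.2.1
    have e : ∫ x in Ω, ⟪(2 : ℝ) • gu' x - ((2 : ℝ) • wt x + ((gu x - wt x) - g x)), ψ x⟫ =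
        ∫ x in Ω, (⟪M.A x ((gu x - wt x) - g x), (gu x - wt x) - g x⟫ + 2 * ⟪ψ x, g x⟫
          + (-2) * ⟪ψ x, gu x - gu' x⟫) := by
      apply integral_congr_ae
      filter_upwards [hdec] with x hx
      rw [hx, real_inner_comm]
      simp only [inner_sub_right, inner_add_right, inner_smul_right]
      ring
    rw [e, aux_lin (aux_int_inner hAh hh2) (aux_int_inner hψ2 hg2) (aux_int_inner hψ2 hd2),
      o1, o2]
    unfold sqA ipA
    ring
  · have e : sqA Ω M.A (fun x => gu x - wt x) =
        ∫ x in Ω, (⟪M.A x (g x), g x⟫ + 1 * ⟪M.A x ((gu x - wt x) - g x), (gu x - wt x) - g x⟫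
          + 2 * ⟪ψ x, g x⟫) := by
      unfold sqA ipA
      apply integral_congr_ae
      filter_upwards [hdec] with x hx
      have h1 : gu x - wt x = g x + ((gu x - wt x) - g x) := by abel
      rw [← hx]
      generalize (gu x - wt x) - g x = h at h1
      rw [h1, map_add]
      have := M.symm x (g x) h
      have h3 := real_inner_comm (g x) (M.A x h)
      simp only [inner_add_left, inner_add_right]
      linarith
    rw [e, aux_lin (aux_int_inner hAg hg2) (aux_int_inner hAh hh2) (aux_int_inner hψ2 hg2), o1]
    unfold sqA ipA
    ring
end
end
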